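/- In the MM-SPIR model (with all constraints), for every size-P subset 𝒫 of {1,…,K} and every database index n ∈ {1,…,N}: P·L ≤ H(A_1^{[𝒫]},…,A_N^{[𝒫]} | F) − H(A_n^{[𝒫]} | F). -/

import Mathlib

open Finset

namespace MMSPIR

variable {Ω : Type} [Fintype Ω]

/-- Probability that the random variable `X` takes the value `v`,
under the weight function `p` on the finite sample space `Ω`. -/
noncomputable def prob (p : Ω → ℝ) {V : Type} [DecidableEq V] (X : Ω → V) (v : V) : ℝ :=
  ∑ ω ∈ Finset.univ.filter (fun ω => X ω = v), p ω

/-- Shannon entropy of `X`, with logarithm taken to base `q`. -/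
noncomputable def ent (q : ℕ) (p : Ω → ℝ) {V : Type} [Fintype V] [DecidableEq V]
    (X : Ω → V) : ℝ :=
  -∑ v : V, prob p X v * Real.logb q (prob p X v)

/-- Conditional entropy `H(X | Y)`, base `q`. -/
noncomputable def cent (q : ℕ) (p : Ω → ℝ) {V W : Type} [Fintype V] [DecidableEq V]
    [Fintype W] [DecidableEq W] (X : Ω → V) (Y : Ω → W) : ℝ :=
  ent q p (fun ω => (X ω, Y ω)) - ent q p Y

/-- Mutual information `I(X ; Y)`, base `q`. -/
noncomputable def mi (q : ℕ) (p : Ω → ℝ) {V W : Type} [Fintype V] [DecidableEq V]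
    [Fintype W] [DecidableEq W] (X : Ω → V) (Y : Ω → W) : ℝ :=
  ent q p X + ent q p Y - ent q p (fun ω => (X ω, Y ω))

/-- Conditional mutual information `I(X ; Y | Z)`, base `q`. -/
noncomputable def cmi (q : ℕ) (p : Ω → ℝ) {U V W : Type} [Fintype U] [DecidableEq U]
    [Fintype V] [DecidableEq V] [Fintype W] [DecidableEq W]
    (X : Ω → U) (Y : Ω → V) (Z : Ω → W) : ℝ :=
  cent q p X Z + cent q p Y Z - cent q p (fun ω => (X ω, Y ω)) Z

/-- `X` and `Y` have the same distribution. -/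
def IdentDist (p : Ω → ℝ) {V : Type} [DecidableEq V] (X Y : Ω → V) : Prop :=
  ∀ v, prob p X v = prob p Y v


lemma prob_eq_ite (p : Ω → ℝ) {V : Type} [DecidableEq V] (X : Ω → V) (v : V) :
    prob p X v = ∑ ω, if X ω = v then p ω else 0 := by
  unfold prob
  rw [Finset.sum_filter]

lemma prob_nonneg (p : Ω → ℝ) (hp0 : ∀ ω, 0 ≤ p ω) {V : Type} [DecidableEq V] (X : Ω → V)
    (v : V) : 0 ≤ prob p X v := Finset.sum_nonneg (fun ω _ => hp0 ω)

lemma le_prob (p : Ω → ℝ) (hp0 : ∀ ω, 0 ≤ p ω) {V : Type} [DecidableEq V] (X : Ω → V)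
    (ω : Ω) : p ω ≤ prob p X (X ω) :=
  Finset.single_le_sum (f := p) (fun ω _ => hp0 ω) (by simp)

lemma sum_prob_mul (p : Ω → ℝ) {V : Type} [Fintype V] [DecidableEq V] (X : Ω → V) (f : V → ℝ) :
    ∑ v, prob p X v * f v = ∑ ω, p ω * f (X ω) := by
  simp_rw [prob_eq_ite, Finset.sum_mul]
  rw [Finset.sum_comm]
  refine Finset.sum_congr rfl fun ω _ => ?_
  simp [ite_mul]

lemma ent_eq (q : ℕ) (p : Ω → ℝ) {V : Type} [Fintype V] [DecidableEq V] (X : Ω → V) :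
    ent q p X = -∑ ω, p ω * Real.logb q (prob p X (X ω)) := by
  unfold ent
  rw [sum_prob_mul p X (fun v => Real.logb q (prob p X v))]

/-- `Y` is a function of `X`. -/
def Det {V W : Type} (X : Ω → V) (Y : Ω → W) : Prop := ∀ ω ω', X ω = X ω' → Y ω = Y ω'

lemma ent_mono {q : ℕ} (hq : 1 < q) {p : Ω → ℝ} (hp0 : ∀ ω, 0 ≤ p ω)
    {V W : Type} [Fintype V] [DecidableEq V] [Fintype W] [DecidableEq W]
    (X : Ω → V) (Y : Ω → W) (h : Det X Y) : ent q p Y ≤ ent q p X := by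
  rw [ent_eq, ent_eq]
  refine neg_le_neg (Finset.sum_le_sum fun ω _ => ?_)
  rcases (hp0 ω).eq_or_lt with h0 | h0
  · simp [← h0]
  · refine mul_le_mul_of_nonneg_left ?_ h0.le
    have hX := lt_of_lt_of_le h0 (le_prob p hp0 X ω)
    refine Real.logb_le_logb_of_le (by exact_mod_cast hq) hX ?_
    unfold prob
    refine Finset.sum_le_sum_of_subset_of_nonneg ?_ (fun ω _ _ => hp0 ω)
    intro ω' hω'
    simp only [Finset.mem_filter, Finset.mem_univ, true_and] at hω' ⊢
    exact h _ _ hω'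

lemma sum_prob (p : Ω → ℝ) {V : Type} [Fintype V] [DecidableEq V] (X : Ω → V) :
    ∑ v, prob p X v = ∑ ω, p ω := by
  simpa using sum_prob_mul p X (fun _ => 1)

lemma sum_prob_pair (p : Ω → ℝ) {V W : Type} [Fintype V] [DecidableEq V] [DecidableEq W]
    (X : Ω → V) (Z : Ω → W) (z : W) :
    ∑ x, prob p (fun ω => (X ω, Z ω)) (x, z) = prob p Z z := by
  simp_rw [prob_eq_ite]
  rw [Finset.sum_comm]
  refine Finset.sum_congr rfl fun ω _ => ?_
  by_cases hz : Z ω = z <;> simp [hz]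

lemma ent_submod_aux {q : ℕ} (hq : 1 < q) {p : Ω → ℝ} (hp0 : ∀ ω, 0 ≤ p ω)
    {U V W : Type} [Fintype U] [DecidableEq U] [Fintype V] [DecidableEq V]
    [Fintype W] [DecidableEq W] (X : Ω → U) (Y : Ω → V) (Z : Ω → W) :
    ent q p (fun ω => (X ω, Y ω, Z ω)) + ent q p Z ≤
      ent q p (fun ω => (X ω, Z ω)) + ent q p (fun ω => (Y ω, Z ω)) := by
  set T : Ω → U × V × W := fun ω => (X ω, Y ω, Z ω) with hT
  set XZ : Ω → U × W := fun ω => (X ω, Z ω) with hXZ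
  set YZ : Ω → V × W := fun ω => (Y ω, Z ω) with hYZ
  have hlq : 0 < Real.log q := Real.log_pos (by exact_mod_cast hq)
  let g : U × V × W → ℝ := fun t =>
    prob p XZ (t.1, t.2.2) * prob p YZ (t.2.1, t.2.2) / prob p Z t.2.2
  have hg0 : ∀ t, 0 ≤ g t := fun t =>
    div_nonneg (mul_nonneg (prob_nonneg p hp0 _ _) (prob_nonneg p hp0 _ _))
      (prob_nonneg p hp0 _ _)
  have hgsum : ∑ t, g t ≤ ∑ ω, p ω := by
    rw [Fintype.sum_prod_type]
    simp_rw [Fintype.sum_prod_type]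
    simp_rw [g]
    rw [← sum_prob p Z]
    have : ∀ z, ∑ x, ∑ y, prob p XZ (x, z) * prob p YZ (y, z) / prob p Z z = prob p Z z := by
      intro z
      simp_rw [← Finset.sum_div, ← Finset.mul_sum]
      rw [sum_prob_pair p Y Z z, ← Finset.sum_mul, sum_prob_pair p X Z z, mul_self_div_self]
    rw [Finset.sum_congr rfl (fun x _ => Finset.sum_comm), Finset.sum_comm]
    exact (Finset.sum_congr rfl (fun z _ => this z)).le
  have hratio : ∑ ω, p ω * (g (T ω) / prob p T (T ω)) ≤ ∑ ω, p ω := by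
    rw [← sum_prob_mul p T (fun t => g t / prob p T t)]
    refine le_trans (Finset.sum_le_sum fun t _ => ?_) hgsum
    rcases (prob_nonneg p hp0 T t).eq_or_lt with h0 | h0
    · rw [← h0]; simpa using hg0 t
    · rw [mul_div_cancel₀ _ h0.ne']
  have hpt : ∀ ω, p ω * Real.logb q (prob p XZ (XZ ω)) + p ω * Real.logb q (prob p YZ (YZ ω))
      - p ω * Real.logb q (prob p T (T ω)) - p ω * Real.logb q (prob p Z (Z ω)) ≤
      (p ω * (g (T ω) / prob p T (T ω)) - p ω) / Real.log q := by
    intro ω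
    rcases (hp0 ω).eq_or_lt with h0 | h0
    · simp [← h0]
    have h1 := lt_of_lt_of_le h0 (le_prob p hp0 XZ ω)
    have h2 := lt_of_lt_of_le h0 (le_prob p hp0 YZ ω)
    have h3 := lt_of_lt_of_le h0 (le_prob p hp0 Z ω)
    have h4 := lt_of_lt_of_le h0 (le_prob p hp0 T ω)
    have hgT : g (T ω) = prob p XZ (XZ ω) * prob p YZ (YZ ω) / prob p Z (Z ω) := rfl
    have hpos : 0 < g (T ω) / prob p T (T ω) := by rw [hgT]; positivity
    have hl := Real.log_le_sub_one_of_pos hpos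
    rw [hgT, Real.log_div (by positivity) h4.ne', Real.log_div (by positivity) h3.ne',
      Real.log_mul h1.ne' h2.ne', ← hgT] at hl
    rw [le_div_iff₀ hlq]
    unfold Real.logb
    have := mul_le_mul_of_nonneg_left hl h0.le
    have hne := hlq.ne'
    have e : (p ω * (Real.log (prob p XZ (XZ ω)) / Real.log q)
        + p ω * (Real.log (prob p YZ (YZ ω)) / Real.log q)
        - p ω * (Real.log (prob p T (T ω)) / Real.log q)
        - p ω * (Real.log (prob p Z (Z ω)) / Real.log q)) * Real.log q =
        p ω * (Real.log (prob p XZ (XZ ω)) + Real.log (prob p YZ (YZ ω))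
          - Real.log (prob p Z (Z ω)) - Real.log (prob p T (T ω))) := by
      field_simp
      ring
    rw [e]
    linarith
  have hs := Finset.sum_le_sum (fun ω (_ : ω ∈ Finset.univ) => hpt ω)
  rw [← Finset.sum_div, Finset.sum_sub_distrib, Finset.sum_sub_distrib, Finset.sum_sub_distrib,
    Finset.sum_add_distrib] at hs
  have h0 : (∑ ω, p ω * (g (T ω) / prob p T (T ω)) - ∑ ω, p ω) / Real.log q ≤ 0 :=
    div_nonpos_of_nonpos_of_nonneg (by linarith) hlq.le
  rw [ent_eq, ent_eq, ent_eq, ent_eq]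
  linarith

/-- Submodularity of entropy. -/
lemma ent_submod {q : ℕ} (hq : 1 < q) {p : Ω → ℝ} (hp0 : ∀ ω, 0 ≤ p ω)
    {U V W R : Type} [Fintype U] [DecidableEq U] [Fintype V] [DecidableEq V]
    [Fintype W] [DecidableEq W] [Fintype R] [DecidableEq R]
    (X : Ω → U) (Y : Ω → V) (C : Ω → R) (D : Ω → W)
    (hXD : Det X D) (hYD : Det Y D) (hC : Det (fun ω => (X ω, Y ω)) C) :
    ent q p C + ent q p D ≤ ent q p X + ent q p Y := by
  have h := ent_submod_aux hq hp0 X Y D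
  have h1 : ent q p C ≤ ent q p (fun ω => (X ω, Y ω, D ω)) := ent_mono hq hp0 _ _ (by
    intro ω ω' h
    simp only [Prod.mk.injEq] at h
    exact hC _ _ (by simp [h.1, h.2.1]))
  have h2 : ent q p (fun ω => (X ω, D ω)) ≤ ent q p X := ent_mono hq hp0 _ _ (by
    intro ω ω' h
    simp [h, hXD _ _ h])
  have h3 : ent q p (fun ω => (Y ω, D ω)) ≤ ent q p Y := ent_mono hq hp0 _ _ (by
    intro ω ω' h
    simp [h, hYD _ _ h])
  linarith

lemma ent_unit {q : ℕ} {p : Ω → ℝ} (hp1 : (∑ ω, p ω) = 1) {V : Type} [Fintype V]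
    [DecidableEq V] (X : Ω → V) (hX : ∀ ω ω', X ω = X ω') : ent q p X = 0 := by
  rw [ent_eq]
  have : ∀ ω, prob p X (X ω) = 1 := by
    intro ω
    rw [prob_eq_ite, ← hp1]
    exact Finset.sum_congr rfl fun ω' _ => by simp [hX ω' ω]
  simp [this]

lemma ent_subadd {q : ℕ} (hq : 1 < q) {p : Ω → ℝ} (hp0 : ∀ ω, 0 ≤ p ω)
    (hp1 : (∑ ω, p ω) = 1)
    {U V R : Type} [Fintype U] [DecidableEq U] [Fintype V] [DecidableEq V]
    [Fintype R] [DecidableEq R]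
    (X : Ω → U) (Y : Ω → V) (C : Ω → R)
    (hC : Det (fun ω => (X ω, Y ω)) C) :
    ent q p C ≤ ent q p X + ent q p Y := by
  have h := ent_submod hq hp0 X Y C (fun _ => ()) (fun _ _ _ => rfl) (fun _ _ _ => rfl) hC
  rwa [ent_unit hp1 (fun _ => ()) (fun _ _ => rfl), add_zero] at h

lemma ent_identDist {q : ℕ} {p : Ω → ℝ} {V W : Type} [Fintype V] [DecidableEq V] [Fintype W]
    [DecidableEq W] (X Y : Ω → V) (h : IdentDist p X Y) (g : V → W) :
    ent q p (fun ω => g (X ω)) = ent q p (fun ω => g (Y ω)) := by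
  have key : ∀ (X : Ω → V) (w : W), prob p (fun ω => g (X ω)) w =
      ∑ v, prob p X v * (if g v = w then 1 else 0) := by
    intro X w
    rw [sum_prob_mul p X (fun v => if g v = w then 1 else 0), prob_eq_ite]
    simp
  unfold ent
  simp_rw [key, h _]

theorem download_lower_bound_step
    {Ω MT QT AT FT ST : Type}
    [Fintype Ω] [Fintype MT] [DecidableEq MT] [Fintype QT] [DecidableEq QT]
    [Fintype AT] [DecidableEq AT] [Fintype FT] [DecidableEq FT]
    [Fintype ST] [DecidableEq ST]
    (N K P L q : ℕ) (hN : 2 ≤ N) (hK : 2 ≤ K) (hP1 : 1 ≤ P) (hP2 : P ≤ K - 1)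
    (hL : 1 ≤ L) (hq : IsPrimePow q)
    (p : Ω → ℝ) (hp0 : ∀ ω, 0 ≤ p ω) (hp1 : (∑ ω, p ω) = 1)
    (W : Fin K → Ω → MT) (F : Ω → FT) (S : Ω → ST)
    (Q : Finset (Fin K) → Fin N → Ω → QT)
    (A : Finset (Fin K) → Fin N → Ω → AT)
    (hWk : ∀ k, ent q p (W k) = (L : ℝ))
    (hWall : ent q p (fun ω (k : Fin K) => W k ω) = (K : ℝ) * L)
    (hind : ent q p (fun ω => (F ω, S ω, fun k : Fin K => W k ω)) =
      ent q p F + ent q p S + ent q p (fun ω (k : Fin K) => W k ω))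
    (hQdet : ∀ 𝒫₀ : Finset (Fin K), 𝒫₀.card = P →
      cent q p (fun ω (n : Fin N) => Q 𝒫₀ n ω) F = 0)
    (hAdet : ∀ 𝒫₀ : Finset (Fin K), 𝒫₀.card = P → ∀ n : Fin N,
      cent q p (A 𝒫₀ n) (fun ω => (Q 𝒫₀ n ω, (fun k : Fin K => W k ω), S ω)) = 0)
    (hrel : ∀ 𝒫₀ : Finset (Fin K), 𝒫₀.card = P →
      cent q p (fun ω (k : {x : Fin K // x ∈ 𝒫₀}) => W k.1 ω)
        (fun ω => ((fun n : Fin N => A 𝒫₀ n ω), F ω)) = 0)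
    (hupriv : ∀ (n : Fin N) (𝒫₁ 𝒫₂ : Finset (Fin K)), 𝒫₁.card = P → 𝒫₂.card = P →
      IdentDist p
        (fun ω => (Q 𝒫₁ n ω, A 𝒫₁ n ω, (fun k : Fin K => W k ω), S ω))
        (fun ω => (Q 𝒫₂ n ω, A 𝒫₂ n ω, (fun k : Fin K => W k ω), S ω)))
    (hdpriv : ∀ 𝒫₀ : Finset (Fin K), 𝒫₀.card = P →
      mi q p (fun ω (k : {x : Fin K // x ∈ 𝒫₀ᶜ}) => W k.1 ω)
        (fun ω => ((fun n : Fin N => Q 𝒫₀ n ω), (fun n : Fin N => A 𝒫₀ n ω), F ω)) = 0)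
    : ∀ (𝒫₀ : Finset (Fin K)), 𝒫₀.card = P → ∀ n : Fin N,
      (P : ℝ) * L ≤ cent q p (fun ω (n : Fin N) => A 𝒫₀ n ω) F - cent q p (A 𝒫₀ n) F := by
  have hq1 : 1 < q := hq.one_lt
  -- subtuples of messages
  let w : (T : Finset (Fin K)) → Ω → ({x : Fin K // x ∈ T} → MT) := fun T ω k => W k.1 ω
  let WA : Ω → (Fin K → MT) := fun ω k => W k ω
  have wdet : ∀ T ω ω', (w T ω = w T ω' ↔ ∀ k ∈ T, W k ω = W k ω') := by
    intro T ω ω'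
    simp [w, funext_iff]
  have WAdet : ∀ ω ω', (WA ω = WA ω' ↔ ∀ k, W k ω = W k ω') := by
    intro ω ω'
    simp [WA, funext_iff]
  have hLr : (0 : ℝ) ≤ L := Nat.cast_nonneg L
  -- adding messages to any variable increases the entropy by at most `L` each
  have hup : ∀ {V : Type} [Fintype V] [DecidableEq V] (B : Ω → V) (T R : Finset (Fin K)),
      ent q p (fun ω => (w (T ∪ R) ω, B ω)) ≤ ent q p (fun ω => (w T ω, B ω)) + R.card * L := by
    intro V _ _ B T R
    induction R using Finset.induction_on with
    | empty =>
      simp only [Finset.card_empty, Nat.cast_zero, zero_mul, add_zero]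
      refine ent_mono hq1 hp0 _ _ ?_
      intro ω ω' h
      simp only [Prod.mk.injEq, wdet] at h ⊢
      simpa using h
    | insert k R hk ih =>
      have h1 := ent_subadd hq1 hp0 hp1 (fun ω => (w (T ∪ R) ω, B ω)) (W k)
        (fun ω => (w (T ∪ insert k R) ω, B ω)) (by
          intro ω ω' h
          simp only [Prod.mk.injEq, wdet] at h ⊢
          refine ⟨fun j hj => ?_, h.1.2⟩
          by_cases hjk : j = k
          · rw [hjk]; exact h.2
          · exact h.1.1 j (by simp only [Finset.mem_union, Finset.mem_insert] at hj ⊢; tauto))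
      rw [hWk] at h1
      rw [Finset.card_insert_of_notMem hk]
      push_cast
      linarith
  have hle : ∀ T : Finset (Fin K), ent q p (w T) ≤ T.card * L := by
    intro T
    have h := hup (fun _ => ()) ∅ T
    rw [ent_unit hp1 (fun ω => (w ∅ ω, ())) (by
      intro ω ω'
      simp [wdet])] at h
    have h2 : ent q p (w T) ≤ ent q p (fun ω => (w (∅ ∪ T) ω, ())) := by
      refine ent_mono hq1 hp0 _ _ ?_
      intro ω ω' h
      simp only [Prod.mk.injEq, wdet] at h ⊢
      simpa using h
    linarith
  have hge : ∀ T : Finset (Fin K), (T.card : ℝ) * L ≤ ent q p (w T) := by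
    intro T
    have h1 := hle Tᶜ
    have h2 : ent q p WA ≤ ent q p (w T) + ent q p (w Tᶜ) := ent_subadd hq1 hp0 hp1 _ _ _ (by
      intro ω ω' h
      simp only [Prod.mk.injEq, wdet, WAdet, Finset.mem_compl] at h ⊢
      intro k
      by_cases hk : k ∈ T
      · exact h.1 k hk
      · exact h.2 k hk)
    have h3 : (T.card : ℝ) + (Tᶜ.card : ℝ) = K := by
      have := Finset.card_add_card_compl T
      rw [Fintype.card_fin] at this
      exact_mod_cast this
    have h4 : ent q p WA = K * L := hWall
    rw [← h3] at h4
    linarith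
  intro Pa hPz n
  let a := A Pa n
  let b := Q Pa n
  let B : Ω → AT × QT := fun ω => (a ω, b ω)
  -- database privacy plus reliability
  have hstep3 : ∀ Pb : Finset (Fin K), Pb.card = P →
      ent q p (fun ω => (w Pb ω, B ω)) + ((Pbᶜ).card : ℝ) * L ≤ ent q p (fun ω => (WA ω, B ω)) := by
    intro Pb hP'
    let AA : Ω → (Fin N → AT) := fun ω n => A Pb n ω
    let QQ : Ω → (Fin N → QT) := fun ω n => Q Pb n ω
    have AAd : ∀ ω ω', AA ω = AA ω' → A Pb n ω = A Pb n ω' := fun ω ω' h => congrFun h n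
    have QQd : ∀ ω ω', QQ ω = QQ ω' → Q Pb n ω = Q Pb n ω' := fun ω ω' h => congrFun h n
    have e1 := ent_identDist (q := q) _ _ (hupriv n Pb Pa hP' hPz)
      (fun t => ((fun k : {x : Fin K // x ∈ Pb} => t.2.2.1 k.1), (t.2.1, t.1)))
    have e2 := ent_identDist (q := q) _ _ (hupriv n Pb Pa hP' hPz)
      (fun t => (t.2.2.1, (t.2.1, t.1)))
    change ent q p (fun ω => (w Pb ω, (A Pb n ω, Q Pb n ω))) =
      ent q p (fun ω => (w Pb ω, B ω)) at e1
    change ent q p (fun ω => (WA ω, (A Pb n ω, Q Pb n ω))) =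
      ent q p (fun ω => (WA ω, B ω)) at e2
    rw [← e1, ← e2]
    have r : ent q p (fun ω => (w Pb ω, (AA ω, F ω))) - ent q p (fun ω => (AA ω, F ω)) = 0 :=
      hrel Pb hP'
    have d : ent q p (w Pbᶜ) + ent q p (fun ω => (QQ ω, AA ω, F ω)) -
      ent q p (fun ω => (w Pbᶜ ω, (QQ ω, AA ω, F ω))) = 0 := hdpriv Pb hP'
    have s1 := ent_submod hq1 hp0 (fun ω => (WA ω, (A Pb n ω, Q Pb n ω)))
      (fun ω => (w Pb ω, (QQ ω, AA ω, F ω))) (fun ω => (w Pbᶜ ω, (QQ ω, AA ω, F ω)))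
      (fun ω => (w Pb ω, (A Pb n ω, Q Pb n ω)))
      (by
        intro ω ω' h
        simp only [Prod.mk.injEq, wdet, WAdet] at h ⊢
        exact ⟨fun k _ => h.1 k, h.2⟩)
      (by
        intro ω ω' h
        simp only [Prod.mk.injEq, wdet, WAdet] at h ⊢
        exact ⟨h.1, AAd _ _ h.2.2.1, QQd _ _ h.2.1⟩)
      (by
        intro ω ω' h
        simp only [Prod.mk.injEq, wdet, WAdet] at h ⊢
        exact ⟨fun k _ => h.1.1 k, h.2.2⟩)
    have s2 := ent_submod hq1 hp0 (fun ω => (w Pb ω, (AA ω, F ω)))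
      (fun ω => (QQ ω, AA ω, F ω)) (fun ω => (w Pb ω, (QQ ω, AA ω, F ω)))
      (fun ω => (AA ω, F ω))
      (by
        intro ω ω' h
        simp only [Prod.mk.injEq] at h ⊢
        exact h.2)
      (by
        intro ω ω' h
        simp only [Prod.mk.injEq] at h ⊢
        exact h.2)
      (by
        intro ω ω' h
        simp only [Prod.mk.injEq] at h ⊢
        exact ⟨h.1.1, h.2⟩)
    have g := hge Pbᶜ
    linarith
  have hk : ∀ k : Fin K, ent q p (fun ω => (w {k}ᶜ ω, B ω)) + L ≤
      ent q p (fun ω => (WA ω, B ω)) := by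
    intro k
    have hc : P ≤ ({k}ᶜ : Finset (Fin K)).card := by
      rw [Finset.card_compl]; simpa using hP2
    obtain ⟨Pb, hsub, hcard⟩ := Finset.exists_subset_card_eq hc
    have h1 := hstep3 Pb hcard
    have h2 := hup B Pb ({k}ᶜ \ Pb)
    rw [Finset.union_sdiff_of_subset hsub] at h2
    have h3 : (({k}ᶜ \ Pb).card : ℝ) + 1 = (Pbᶜ).card := by
      have a1 := Finset.card_sdiff_add_card_eq_card hsub
      have a2 := Finset.card_add_card_compl Pb
      have a3 := Finset.card_add_card_compl ({k} : Finset (Fin K))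
      rw [Finset.card_singleton] at a3
      have : ({k}ᶜ \ Pb).card + 1 = (Pbᶜ).card := by omega
      exact_mod_cast this
    rw [← h3] at h1
    linarith
  have hlow : ∀ T : Finset (Fin K),
      ent q p B + T.card * L ≤ ent q p (fun ω => (w T ω, B ω)) := by
    intro T
    induction T using Finset.induction_on with
    | empty =>
      simp only [Finset.card_empty, Nat.cast_zero, zero_mul, add_zero]
      refine ent_mono hq1 hp0 _ _ ?_
      intro ω ω' h
      exact (Prod.mk.inj h).2
    | insert k T hkT ih =>
      have h1 := hk k
      have h2 := ent_submod hq1 hp0 (fun ω => (w (insert k T) ω, B ω))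
        (fun ω => (w {k}ᶜ ω, B ω)) (fun ω => (WA ω, B ω)) (fun ω => (w T ω, B ω))
        (by
          intro ω ω' h
          simp only [Prod.mk.injEq, wdet] at h ⊢
          exact ⟨fun j hj => h.1 j (Finset.mem_insert_of_mem hj), h.2⟩)
        (by
          intro ω ω' h
          simp only [Prod.mk.injEq, wdet] at h ⊢
          refine ⟨fun j hj => h.1 j ?_, h.2⟩
          simp only [Finset.mem_compl, Finset.mem_singleton]
          rintro rfl
          exact hkT hj)
        (by
          intro ω ω' h
          simp only [Prod.mk.injEq, wdet, WAdet] at h ⊢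
          refine ⟨fun j => ?_, h.1.2⟩
          by_cases hj : j = k
          · exact h.1.1 j (by simp [hj])
          · exact h.2.1 j (by simp [hj]))
      rw [Finset.card_insert_of_notMem hkT]
      push_cast
      linarith
  have hmain := hlow Pa
  rw [hPz] at hmain
  -- Markov chain F - Q_n - (W, S, A_n)
  let Y : Ω → (Fin K → MT) × ST := fun ω => (WA ω, S ω)
  have Yd : ∀ ω ω', Y ω = Y ω' → (∀ k, W k ω = W k ω') ∧ S ω = S ω' := by
    intro ω ω' h
    have h' := Prod.mk.inj h
    exact ⟨(WAdet _ _).1 h'.1, h'.2⟩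
  have hYF : ent q p Y + ent q p F ≤ ent q p (fun ω => (Y ω, F ω)) := by
    have h1 : ent q p Y ≤ ent q p WA + ent q p S :=
      ent_subadd hq1 hp0 hp1 _ _ _ (fun _ _ h => h)
    have h2 : ent q p (fun ω => (F ω, S ω, WA ω)) = ent q p F + ent q p S + ent q p WA := hind
    have h3 : ent q p (fun ω => (F ω, S ω, WA ω)) ≤ ent q p (fun ω => (Y ω, F ω)) :=
      ent_mono hq1 hp0 _ _ (by
        intro ω ω' h
        simp only [Y, Prod.mk.injEq] at h ⊢
        tauto)
    linarith
  have haY : ent q p (fun ω => (Y ω, B ω)) ≤ ent q p Y + ent q p b := by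
    have h0 : ent q p (fun ω => (a ω, (b ω, WA ω, S ω))) - ent q p (fun ω => (b ω, WA ω, S ω)) = 0 :=
      hAdet Pa hPz n
    have h1 : ent q p (fun ω => (Y ω, B ω)) ≤ ent q p (fun ω => (a ω, (b ω, WA ω, S ω))) :=
      ent_mono hq1 hp0 _ _ (by
        intro ω ω' h
        simp only [Y, B, Prod.mk.injEq] at h ⊢
        tauto)
    have h2 : ent q p (fun ω => (b ω, WA ω, S ω)) ≤ ent q p Y + ent q p b :=
      ent_subadd hq1 hp0 hp1 _ _ _ (by
        intro ω ω' h
        simp only [Y, Prod.mk.injEq] at h ⊢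
        tauto)
    linarith
  have hbF : ent q p (fun ω => (b ω, F ω)) ≤ ent q p F := by
    have h0 : ent q p (fun ω => ((fun n : Fin N => Q Pa n ω), F ω)) - ent q p F = 0 := hQdet Pa hPz
    have h1 : ent q p (fun ω => (b ω, F ω)) ≤
        ent q p (fun ω => ((fun n : Fin N => Q Pa n ω), F ω)) :=
      ent_mono hq1 hp0 _ _ (by
        intro ω ω' h
        simp only [Prod.mk.injEq] at h ⊢
        exact ⟨congrFun h.1 n, h.2⟩)
    linarith
  have m1 := ent_submod hq1 hp0 (fun ω => (w Pa ω, B ω, F ω)) (fun ω => (Y ω, B ω))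
    (fun ω => (Y ω, F ω)) (fun ω => (w Pa ω, B ω))
    (by
      intro ω ω' h
      simp only [Prod.mk.injEq] at h ⊢
      tauto)
    (by
      intro ω ω' h
      simp only [Prod.mk.injEq, wdet] at h ⊢
      exact ⟨fun k _ => (Yd _ _ h.1).1 k, h.2⟩)
    (by
      intro ω ω' h
      simp only [Prod.mk.injEq] at h ⊢
      tauto)
  have m2 := ent_submod hq1 hp0 B (fun ω => (b ω, F ω)) (fun ω => (a ω, F ω)) b
    (by
      intro ω ω' h
      exact (Prod.mk.inj h).2)
    (by
      intro ω ω' h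
      exact (Prod.mk.inj h).1)
    (by
      intro ω ω' h
      simp only [B, Prod.mk.injEq] at h ⊢
      tauto)
  have m3 := ent_submod hq1 hp0 (fun ω => (w Pa ω, a ω, F ω)) (fun ω => (b ω, F ω))
    (fun ω => (w Pa ω, B ω, F ω)) F
    (by
      intro ω ω' h
      simp only [Prod.mk.injEq] at h ⊢
      tauto)
    (by
      intro ω ω' h
      exact (Prod.mk.inj h).2)
    (by
      intro ω ω' h
      simp only [B, Prod.mk.injEq] at h ⊢
      tauto)
  have r : ent q p (fun ω => (w Pa ω, ((fun n : Fin N => A Pa n ω), F ω))) -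
      ent q p (fun ω => ((fun n : Fin N => A Pa n ω), F ω)) = 0 := hrel Pa hPz
  have m4 : ent q p (fun ω => (w Pa ω, a ω, F ω)) ≤
      ent q p (fun ω => (w Pa ω, ((fun n : Fin N => A Pa n ω), F ω))) :=
    ent_mono hq1 hp0 _ _ (by
      intro ω ω' h
      simp only [Prod.mk.injEq] at h ⊢
      exact ⟨h.1, congrFun h.2.1 n, h.2.2⟩)
  change (P : ℝ) * L ≤ (ent q p (fun ω => ((fun n : Fin N => A Pa n ω), F ω)) - ent q p F) -
    (ent q p (fun ω => (a ω, F ω)) - ent q p F)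
  linarith


end MMSPIR
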